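/- In the PR-MDP zero-sum game, the minimax Bellman operator decouples into two independent single-agent optimizations: for every bounded v ∈ ℝ^S, T v = (1−α) max_{μ} (r^μ + γ P^μ v) + α min_{ν} (r^ν + γ P^ν v) componentwise, where r^μ(s) = ∫_A r(s,a) dμ(s)(a) and P^μ(s,s') = ∫_A P(s'|s,a) dμ(s)(a); the same decoupling holds for T̄, and in particular T v = T̄ v. -/

import Mathlib

/-!
Integrating the mixture `(1 - α) g(a) + α g(b)` against a product of probability measures gives
`(1 - α) ∫ g dμ + α ∫ g dν`, so `T^{μ,ν} v (s) = (1 - α) f μ + α f ν` with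
`f μ = r^μ(s) + γ (P^μ v)(s)` (`Tpol_PR`). Continuity of `r` and `P` on the compact space `A` makes
`f` bounded (`exists_bound_policy_value`), so the suprema and infima are genuine ones, and an
additively separated function with nonnegative weights has the same separated value under
sup-inf and inf-sup (`iSup_iInf_separated`, `iInf_iSup_separated`).
-/

open MeasureTheory

/-- Expected one-step reward `r^{μ,ν}(s) = ∫_A ∫_B r(s,a,b) dν(s)(b) dμ(s)(a)`. -/
noncomputable def rPol {S A B : Type*} [MeasurableSpace A] [MeasurableSpace B]
    (r : S → A → B → ℝ)
    (μ : S → ProbabilityMeasure A) (ν : S → ProbabilityMeasure B) (s : S) : ℝ :=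
  ∫ a, ∫ b, r s a b ∂(ν s : Measure B) ∂(μ s : Measure A)

/-- Induced stochastic matrix `P^{μ,ν}(s,s') = ∫_A ∫_B P(s'|s,a,b) dν(s)(b) dμ(s)(a)`. -/
noncomputable def Pmat {S A B : Type*} [Fintype S] [MeasurableSpace A] [MeasurableSpace B]
    (P : S → S → A → B → ℝ)
    (μ : S → ProbabilityMeasure A) (ν : S → ProbabilityMeasure B) : Matrix S S ℝ :=
  Matrix.of fun s s' => ∫ a, ∫ b, P s s' a b ∂(ν s : Measure B) ∂(μ s : Measure A)

/-- Fixed-policy Bellman operator `T^{μ,ν} v = r^{μ,ν} + γ P^{μ,ν} v`. -/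
noncomputable def Tpol {S A B : Type*} [Fintype S] [MeasurableSpace A] [MeasurableSpace B]
    (γ : ℝ) (r : S → A → B → ℝ) (P : S → S → A → B → ℝ)
    (μ : S → ProbabilityMeasure A) (ν : S → ProbabilityMeasure B)
    (v : S → ℝ) : S → ℝ :=
  fun s => rPol r μ ν s + γ * (Pmat P μ ν).mulVec v s

/-- Value of the pair of stationary policies: `v^{μ,ν} = Σ_{t≥0} γ^t (P^{μ,ν})^t r^{μ,ν}`. -/
noncomputable def vVal {S A B : Type*} [Fintype S] [DecidableEq S]
    [MeasurableSpace A] [MeasurableSpace B]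
    (γ : ℝ) (r : S → A → B → ℝ) (P : S → S → A → B → ℝ)
    (μ : S → ProbabilityMeasure A) (ν : S → ProbabilityMeasure B) : S → ℝ :=
  ∑' t : ℕ, γ ^ t • ((Pmat P μ ν ^ t).mulVec (rPol r μ ν))

/-- PR-MDP two-player reward `r_{P,α}(s,a,b) = (1-α) r(s,a) + α r(s,b)`. -/
noncomputable def rPR {S A : Type*} (α : ℝ) (r : S → A → ℝ) : S → A → A → ℝ :=
  fun s a b => (1 - α) * r s a + α * r s b

/-- PR-MDP two-player transitions `P_{P,α}(s'|s,a,b) = (1-α) P(s'|s,a) + α P(s'|s,b)`. -/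
noncomputable def PPR {S A : Type*} (α : ℝ) (P : S → S → A → ℝ) : S → S → A → A → ℝ :=
  fun s s' a b => (1 - α) * P s s' a + α * P s s' b

/-- Single-agent expected reward `r^μ(s) = ∫_A r(s,a) dμ(s)(a)`. -/
noncomputable def rPol1 {S A : Type*} [MeasurableSpace A]
    (r : S → A → ℝ) (μ : S → ProbabilityMeasure A) (s : S) : ℝ :=
  ∫ a, r s a ∂(μ s : Measure A)

/-- Single-agent induced stochastic matrix `P^μ(s,s') = ∫_A P(s'|s,a) dμ(s)(a)`. -/
noncomputable def Pmat1 {S A : Type*} [Fintype S] [MeasurableSpace A]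
    (P : S → S → A → ℝ) (μ : S → ProbabilityMeasure A) : Matrix S S ℝ :=
  Matrix.of fun s s' => ∫ a, P s s' a ∂(μ s : Measure A)

/-- The deterministic stationary policy `d : S → A`, identified with Dirac measures. -/
noncomputable def detPol {S A : Type*} [MeasurableSpace A] (d : S → A) :
    S → ProbabilityMeasure A :=
  fun s => ⟨MeasureTheory.Measure.dirac (d s), inferInstance⟩

lemma integrable_of_continuous_compact {A : Type*} [MetricSpace A] [CompactSpace A]
    [MeasurableSpace A] [BorelSpace A] (m : ProbabilityMeasure A) {g : A → ℝ}
    (hg : Continuous g) : Integrable g (m : Measure A) :=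
  hg.integrable_of_hasCompactSupport (HasCompactSupport.of_compactSpace g)

lemma integral_mix {A : Type*} [MetricSpace A] [CompactSpace A]
    [MeasurableSpace A] [BorelSpace A] (m n : ProbabilityMeasure A) (α : ℝ) {g : A → ℝ}
    (hg : Continuous g) :
    ∫ a, ∫ b, ((1 - α) * g a + α * g b) ∂(n : Measure A) ∂(m : Measure A)
      = (1 - α) * ∫ a, g a ∂(m : Measure A) + α * ∫ b, g b ∂(n : Measure A) := by
  have hm := integrable_of_continuous_compact m hg
  have hn := integrable_of_continuous_compact n hg
  have inner : ∀ a, ∫ b, ((1 - α) * g a + α * g b) ∂(n : Measure A)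
      = (1 - α) * g a + α * ∫ b, g b ∂(n : Measure A) := by
    intro a
    rw [integral_add (integrable_const _) (hn.const_mul α), integral_const_mul α]
    simp
  simp_rw [inner]
  rw [integral_add (hm.const_mul _) (integrable_const _), integral_const_mul]
  simp

/-- For a fixed pair of policies, the PR-MDP Bellman operator is the `α`-mixture of the two
single-agent ones. -/
lemma Tpol_PR {S A : Type*} [Fintype S]
    [MetricSpace A] [CompactSpace A] [MeasurableSpace A] [BorelSpace A]
    (γ α : ℝ) (r : S → A → ℝ) (hr : ∀ s, Continuous fun a : A => r s a)
    (P : S → S → A → ℝ) (hP : ∀ s s', Continuous fun a : A => P s s' a)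
    (v : S → ℝ) (s : S) (μ ν : S → ProbabilityMeasure A) :
    Tpol γ (rPR α r) (PPR α P) μ ν v s
      = (1 - α) * (rPol1 r μ s + γ * (Pmat1 P μ).mulVec v s)
        + α * (rPol1 r ν s + γ * (Pmat1 P ν).mulVec v s) := by
  have hPm : (Pmat (PPR α P) μ ν).mulVec v s
      = (1 - α) * (Pmat1 P μ).mulVec v s + α * (Pmat1 P ν).mulVec v s := by
    simp only [Matrix.mulVec, dotProduct, Pmat, Pmat1, PPR, Matrix.of_apply, Finset.mul_sum,
      ← Finset.sum_add_distrib]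
    refine Finset.sum_congr rfl fun s' _ => ?_
    rw [integral_mix (μ s) (ν s) α (hP s s')]
    ring
  have hrm : rPol (rPR α r) μ ν s = (1 - α) * rPol1 r μ s + α * rPol1 r ν s :=
    integral_mix (μ s) (ν s) α (hr s)
  simp only [Tpol, hPm, hrm]
  ring

lemma exists_bound_integral {A : Type*} [MetricSpace A] [CompactSpace A]
    [MeasurableSpace A] {g : A → ℝ} (hg : Continuous g) :
    ∃ C, ∀ m : ProbabilityMeasure A, |∫ a, g a ∂(m : Measure A)| ≤ C := by
  obtain ⟨C, hC⟩ := isCompact_univ.exists_bound_of_continuousOn hg.continuousOn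
  refine ⟨C, fun m => ?_⟩
  simpa using norm_integral_le_of_norm_le_const (μ := (m : Measure A))
    (Filter.Eventually.of_forall fun a => hC a (Set.mem_univ a))

lemma exists_bound_policy_value {S A : Type*} [Fintype S]
    [MetricSpace A] [CompactSpace A] [MeasurableSpace A]
    (γ : ℝ) (r : S → A → ℝ) (hr : ∀ s, Continuous fun a : A => r s a)
    (P : S → S → A → ℝ) (hP : ∀ s s', Continuous fun a : A => P s s' a)
    (v : S → ℝ) (s : S) :
    ∃ C, ∀ μ : S → ProbabilityMeasure A,
      |rPol1 r μ s + γ * (Pmat1 P μ).mulVec v s| ≤ C := by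
  obtain ⟨C, hC⟩ := exists_bound_integral (hr s)
  choose D hD using fun s' => exists_bound_integral (hP s s')
  refine ⟨C + |γ| * ∑ s', D s' * |v s'|, fun μ => ?_⟩
  refine (abs_add_le _ _).trans (add_le_add (hC (μ s)) ?_)
  rw [abs_mul]
  refine mul_le_mul_of_nonneg_left ?_ (abs_nonneg γ)
  simp only [Matrix.mulVec, dotProduct, Pmat1, Matrix.of_apply]
  refine (Finset.abs_sum_le_sum_abs _ _).trans (Finset.sum_le_sum fun s' _ => ?_)
  rw [abs_mul]
  exact mul_le_mul_of_nonneg_right (hD s' (μ s)) (abs_nonneg _)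

lemma iInf_const_add_mul {ι : Type*} [Nonempty ι] {f : ι → ℝ} (hf : BddBelow (Set.range f))
    (c : ℝ) {α : ℝ} (hα : 0 ≤ α) : ⨅ i, (c + α * f i) = c + α * ⨅ i, f i := by
  rw [Real.mul_iInf_of_nonneg hα]
  refine ((OrderIso.addLeft c).map_ciInf ?_).symm
  obtain ⟨m, hm⟩ := hf
  refine ⟨α * m, ?_⟩
  rintro _ ⟨i, rfl⟩
  exact mul_le_mul_of_nonneg_left (hm ⟨i, rfl⟩) hα

lemma iSup_mul_add_const {ι : Type*} [Nonempty ι] {f : ι → ℝ} (hf : BddAbove (Set.range f))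
    (c : ℝ) {β : ℝ} (hβ : 0 ≤ β) : ⨆ i, (β * f i + c) = β * (⨆ i, f i) + c := by
  rw [Real.mul_iSup_of_nonneg hβ]
  refine ((OrderIso.addRight c).map_ciSup ?_).symm
  obtain ⟨m, hm⟩ := hf
  refine ⟨β * m, ?_⟩
  rintro _ ⟨i, rfl⟩
  exact mul_le_mul_of_nonneg_left (hm ⟨i, rfl⟩) hβ

lemma iSup_iInf_separated {ι : Type*} [Nonempty ι] {f : ι → ℝ} (ha : BddAbove (Set.range f))
    (hb : BddBelow (Set.range f)) {β α : ℝ} (hβ : 0 ≤ β) (hα : 0 ≤ α) :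
    ⨆ i, ⨅ j, (β * f i + α * f j) = β * (⨆ i, f i) + α * ⨅ j, f j := by
  simp_rw [iInf_const_add_mul hb _ hα]
  exact iSup_mul_add_const ha _ hβ

lemma iInf_iSup_separated {ι : Type*} [Nonempty ι] {f : ι → ℝ} (ha : BddAbove (Set.range f))
    (hb : BddBelow (Set.range f)) {β α : ℝ} (hβ : 0 ≤ β) (hα : 0 ≤ α) :
    ⨅ j, ⨆ i, (β * f i + α * f j) = β * (⨆ i, f i) + α * ⨅ j, f j := by
  simp_rw [iSup_mul_add_const ha _ hβ]
  exact iInf_const_add_mul hb _ hα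

theorem stmt12 {S A : Type*} [Fintype S] [DecidableEq S]
    [MetricSpace A] [CompactSpace A] [Nonempty A] [MeasurableSpace A] [BorelSpace A]
    (γ : ℝ) (hγ : γ ∈ Set.Ioo (0:ℝ) 1)
    (α : ℝ) (hα : α ∈ Set.Icc (0:ℝ) 1)
    (r : S → A → ℝ) (hr : ∀ s, Continuous fun a : A => r s a)
    (P : S → S → A → ℝ)
    (hPcont : ∀ s s', Continuous fun a : A => P s s' a)
    (hP0 : ∀ s s' a, 0 ≤ P s s' a) (hP1 : ∀ s s' a, P s s' a ≤ 1)
    (hPsum : ∀ s a, ∑ s', P s s' a = 1)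
    (v : S → ℝ) (s : S) :
    (⨆ μ : S → ProbabilityMeasure A, ⨅ ν : S → ProbabilityMeasure A,
        Tpol γ (rPR α r) (PPR α P) μ ν v s)
      = (1 - α) * (⨆ μ : S → ProbabilityMeasure A,
            (rPol1 r μ s + γ * (Pmat1 P μ).mulVec v s))
        + α * (⨅ ν : S → ProbabilityMeasure A,
            (rPol1 r ν s + γ * (Pmat1 P ν).mulVec v s))
    ∧ (⨅ ν : S → ProbabilityMeasure A, ⨆ μ : S → ProbabilityMeasure A,
        Tpol γ (rPR α r) (PPR α P) μ ν v s)
      = (1 - α) * (⨆ μ : S → ProbabilityMeasure A,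
            (rPol1 r μ s + γ * (Pmat1 P μ).mulVec v s))
        + α * (⨅ ν : S → ProbabilityMeasure A,
            (rPol1 r ν s + γ * (Pmat1 P ν).mulVec v s))
    ∧ (⨆ μ : S → ProbabilityMeasure A, ⨅ ν : S → ProbabilityMeasure A,
        Tpol γ (rPR α r) (PPR α P) μ ν v s)
      = (⨅ ν : S → ProbabilityMeasure A, ⨆ μ : S → ProbabilityMeasure A,
        Tpol γ (rPR α r) (PPR α P) μ ν v s) := by
  -- Dirac measures make the set of policies nonempty, as `OrderIso.map_ciSup` requires.
  have : Nonempty (S → ProbabilityMeasure A) := ⟨detPol fun _ => Classical.arbitrary A⟩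
  obtain ⟨C, hC⟩ := exists_bound_policy_value γ r hr P hPcont v s
  have ha : BddAbove (Set.range fun μ : S → ProbabilityMeasure A =>
      rPol1 r μ s + γ * (Pmat1 P μ).mulVec v s) := by
    refine ⟨C, ?_⟩
    rintro _ ⟨μ, rfl⟩
    exact (abs_le.1 (hC μ)).2
  have hb : BddBelow (Set.range fun μ : S → ProbabilityMeasure A =>
      rPol1 r μ s + γ * (Pmat1 P μ).mulVec v s) := by
    refine ⟨-C, ?_⟩
    rintro _ ⟨μ, rfl⟩
    exact (abs_le.1 (hC μ)).1
  have hβ : 0 ≤ 1 - α := sub_nonneg.2 hα.2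
  simp_rw [Tpol_PR γ α r hr P hPcont v s]
  have h1 := iSup_iInf_separated ha hb hβ hα.1
  have h2 := iInf_iSup_separated ha hb hβ hα.1
  exact ⟨h1, h2, h1.trans h2.symm⟩
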